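/- Let D = (V,E) be a finite digraph and let DX be the Hopf algebroid of flat extendible pivotal-adaptable bimodule connections for the digraph calculus with Ω²_top, presented as a quotient of the path algebra of the double digraph D^db by the relations of Theorems on HX¹ and the triangle/square relations. Then the isotropy quotient DX/⟨s(f_p) − t(f_p) : p ∈ V⟩ is isomorphic as a Hopf algebroid to the groupoid algebra k Π_D of the fundamental groupoid of D. -/

import Mathlib

open TensorProduct

/-! ### A general framework for left bialgebroids and left Hopf algebroids.

Comultiplications are encoded at the level of chosen linear representatives in the
plain tensor product `H ⊗[k] H`; the tensor product over the base algebra `A` is the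
quotient by the `balancer` submodule spanned by the elements
`(t a * x) ⊗ y - x ⊗ (s a * y)`.  Axioms that genuinely live in `H ⊗_A H` are stated
modulo this submodule. -/

section BialgebroidFramework

variable (k A H : Type) [CommRing k] [Ring A] [Ring H] [Algebra k A] [Algebra k H]

/-- The submodule of `H ⊗[k] H` whose quotient is `H ⊗_A H` for the bimodule
structure `a · h · a' = s(a) t(a') h`. -/
def balancer (s : A →ₐ[k] H) (t : A →ₗ[k] H) : Submodule k (H ⊗[k] H) :=
  Submodule.span k {z | ∃ (a : A) (x y : H), z = (t a * x) ⊗ₜ[k] y - x ⊗ₜ[k] (s a * y)}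

/-- The analogous submodule for the triple tensor product. -/
def balancer3 (s : A →ₐ[k] H) (t : A →ₗ[k] H) : Submodule k (H ⊗[k] (H ⊗[k] H)) :=
  Submodule.span k
    ({z | ∃ (a : A) (x y w : H), z = (t a * x) ⊗ₜ[k] (y ⊗ₜ[k] w) - x ⊗ₜ[k] ((s a * y) ⊗ₜ[k] w)} ∪
     {z | ∃ (a : A) (x y w : H), z = x ⊗ₜ[k] ((t a * y) ⊗ₜ[k] w) - x ⊗ₜ[k] (y ⊗ₜ[k] (s a * w))})

/-- The submodule of `H ⊗[k] H` whose quotient is `H ⊗_{A^op} H`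
(balanced over the target map: `(x * t a) ⊗ y ~ x ⊗ (t a * y)`). -/
def opBalancer (t : A →ₗ[k] H) : Submodule k (H ⊗[k] H) :=
  Submodule.span k {z | ∃ (a : A) (x y : H), z = (x * t a) ⊗ₜ[k] y - x ⊗ₜ[k] (t a * y)}

/-- A left `A`-bialgebroid structure on the `k`-algebra `H`. -/
structure LeftBialgebroid where
  /-- the source map -/
  src : A →ₐ[k] H
  /-- the target map (an anti-algebra map) -/
  tgt : A →ₗ[k] H
  tgt_one : tgt 1 = 1
  tgt_mul : ∀ a b : A, tgt (a * b) = tgt b * tgt a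
  src_tgt_comm : ∀ a b : A, src a * tgt b = tgt b * src a
  /-- a linear representative of the comultiplication `H → H ⊗_A H` -/
  comul : H →ₗ[k] H ⊗[k] H
  /-- the counit -/
  counit : H →ₗ[k] A
  counit_one : counit 1 = 1
  counit_src : ∀ (a : A) (h : H), counit (src a * h) = a * counit h
  counit_tgt : ∀ (a : A) (h : H), counit (tgt a * h) = counit h * a
  counit_mul : ∀ g h : H, counit (g * h) = counit (g * src (counit h))
  comul_one : comul 1 - (1 : H) ⊗ₜ[k] (1 : H) ∈ balancer k A H src tgt
  comul_mul : ∀ g h : H, comul (g * h) - comul g * comul h ∈ balancer k A H src tgt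
  comul_bimod : ∀ (a a' : A) (h : H),
    comul (src a * (tgt a' * h)) -
      (TensorProduct.map (LinearMap.mulLeft k (src a)) (LinearMap.mulLeft k (tgt a')))
        (comul h) ∈ balancer k A H src tgt
  comul_coassoc : ∀ h : H,
    (TensorProduct.assoc k H H H) ((LinearMap.rTensor H comul) (comul h)) -
      (LinearMap.lTensor H comul) (comul h) ∈ balancer3 k A H src tgt
  comul_counit_left : ∀ h : H,
    (LinearMap.mul' k H) ((LinearMap.rTensor H (src.toLinearMap ∘ₗ counit)) (comul h)) = h
  comul_counit_right : ∀ h : H,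
    (LinearMap.mul' k H)
      ((LinearMap.rTensor H (tgt ∘ₗ counit)) ((TensorProduct.comm k H H) (comul h))) = h

variable {k A H}

/-- Two-sided ideals, encoded as `k`-submodules closed under multiplication. -/
structure IsTwoSidedIdeal (I : Submodule k H) : Prop where
  mul_mem_left : ∀ (h x : H), x ∈ I → h * x ∈ I
  mul_mem_right : ∀ (h x : H), x ∈ I → x * h ∈ I

variable (k H) in
/-- The image of `I ⊗ H` inside `H ⊗[k] H`. -/
def leftSlice (I : Submodule k H) : Submodule k (H ⊗[k] H) :=
  Submodule.span k {z | ∃ x ∈ I, ∃ y : H, z = x ⊗ₜ[k] y}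

variable (k H) in
/-- The image of `H ⊗ I` inside `H ⊗[k] H`. -/
def rightSlice (I : Submodule k H) : Submodule k (H ⊗[k] H) :=
  Submodule.span k {z | ∃ y : H, ∃ x ∈ I, z = y ⊗ₜ[k] x}

/-- `I` is a two-sided coideal of the `A`-coring `H`:
`Δ(I) ⊆ Im(I ⊗_A H + H ⊗_A I)` and `ε(I) = 0`. -/
structure IsCoideal (B : LeftBialgebroid k A H) (I : Submodule k H) : Prop where
  comul_mem : ∀ x ∈ I,
    B.comul x ∈ leftSlice k H I ⊔ rightSlice k H I ⊔ balancer k A H B.src B.tgt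
  counit_eq_zero : ∀ x ∈ I, B.counit x = 0

/-- A morphism of left bialgebroids over the same base `A`. -/
def IsBialgebroidHom {H' : Type} [Ring H'] [Algebra k H']
    (B : LeftBialgebroid k A H) (B' : LeftBialgebroid k A H') (f : H →ₐ[k] H') : Prop :=
  (∀ a : A, f (B.src a) = B'.src a) ∧ (∀ a : A, f (B.tgt a) = B'.tgt a) ∧
  (∀ h : H, B'.counit (f h) = B.counit h) ∧
  (∀ h : H, (TensorProduct.map f.toLinearMap f.toLinearMap) (B.comul h) - B'.comul (f h)
      ∈ balancer k A H' B'.src B'.tgt)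

variable (k A H) in
/-- A representative of the Galois map `β : H ⊗_{A^op} H → H ⊗_A H`,
`b ⊗ b' ↦ b₍₁₎ ⊗ b₍₂₎ b'`. -/
noncomputable def galoisRep (B : LeftBialgebroid k A H) : H ⊗[k] H →ₗ[k] H ⊗[k] H :=
  TensorProduct.lift
    (LinearMap.mk₂ k (fun b b' => B.comul b * ((1 : H) ⊗ₜ[k] b'))
      (by intros; simp [mul_add, add_mul, TensorProduct.tmul_add, TensorProduct.add_tmul, smul_mul_assoc, mul_smul_comm, ← TensorProduct.smul_tmul', TensorProduct.tmul_smul])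
      (by intros; simp [mul_add, add_mul, TensorProduct.tmul_add, TensorProduct.add_tmul, smul_mul_assoc, mul_smul_comm, ← TensorProduct.smul_tmul', TensorProduct.tmul_smul])
      (by intros; simp [mul_add, add_mul, TensorProduct.tmul_add, TensorProduct.add_tmul, smul_mul_assoc, mul_smul_comm, ← TensorProduct.smul_tmul', TensorProduct.tmul_smul])
      (by intros; simp [mul_add, add_mul, TensorProduct.tmul_add, TensorProduct.add_tmul, smul_mul_assoc, mul_smul_comm, ← TensorProduct.smul_tmul', TensorProduct.tmul_smul]))

/-- A left bialgebroid is a left Hopf algebroid (Schauenburg) when the Galois map,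
viewed as a map `H ⊗_{A^op} H → H ⊗_A H`, is bijective. -/
structure IsLeftHopf (B : LeftBialgebroid k A H) : Prop where
  descends : opBalancer k A H B.tgt ≤
    (balancer k A H B.src B.tgt).comap (galoisRep k A H B)
  bijective : Function.Bijective
    (Submodule.mapQ (opBalancer k A H B.tgt) (balancer k A H B.src B.tgt)
      (galoisRep k A H B) descends)

/-- The (left) Hopf condition for an ideal: for every `h ∈ I`,
`β⁻¹(h ⊗ 1)` lies in the image of `I ⊗_{A^op} H + H ⊗_{A^op} I`; equivalently there is a
representative `w` in the slices with `β(w) = h ⊗ 1` in `H ⊗_A H`. -/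
def HopfIdealCondition (B : LeftBialgebroid k A H) (I : Submodule k H) : Prop :=
  ∀ h ∈ I, ∃ w ∈ leftSlice k H I ⊔ rightSlice k H I,
    galoisRep k A H B w - h ⊗ₜ[k] (1 : H) ∈ balancer k A H B.src B.tgt

/-- A Hopf ideal pair `(J, I)` of a left Hopf algebroid, allowing base change. -/
structure IsHopfIdealPair (B : LeftBialgebroid k A H)
    (J : Submodule k A) (I : Submodule k H) : Prop where
  idealJ : IsTwoSidedIdeal J
  idealI : IsTwoSidedIdeal I
  src_mem : ∀ a ∈ J, B.src a ∈ I
  tgt_mem : ∀ a ∈ J, B.tgt a ∈ I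
  comul_mem : ∀ x ∈ I,
    B.comul x ∈ leftSlice k H I ⊔ rightSlice k H I ⊔ balancer k A H B.src B.tgt
  counit_mem : ∀ x ∈ I, B.counit x ∈ J
  hopf : HopfIdealCondition B I

/-- An (invertible) antipode on a left bialgebroid. -/
structure Antipode (B : LeftBialgebroid k A H) where
  S : H ≃ₗ[k] H
  S_one : S 1 = 1
  S_mul : ∀ g h : H, S (g * h) = S h * S g
  S_src : ∀ a : A, S (B.src a) = B.tgt a
  antipode2 : ∀ b : H,
    (TensorProduct.lift (LinearMap.mk₂ k
        (fun x y => B.comul (S x) * (y ⊗ₜ[k] (1 : H)))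
        (by intros; simp [mul_add, add_mul, TensorProduct.tmul_add, TensorProduct.add_tmul, smul_mul_assoc, mul_smul_comm, ← TensorProduct.smul_tmul', TensorProduct.tmul_smul])
        (by intros; simp [mul_add, add_mul, TensorProduct.tmul_add, TensorProduct.add_tmul, smul_mul_assoc, mul_smul_comm, ← TensorProduct.smul_tmul', TensorProduct.tmul_smul])
        (by intros; simp [mul_add, add_mul, TensorProduct.tmul_add, TensorProduct.add_tmul, smul_mul_assoc, mul_smul_comm, ← TensorProduct.smul_tmul', TensorProduct.tmul_smul])
        (by intros; simp [mul_add, add_mul, TensorProduct.tmul_add, TensorProduct.add_tmul, smul_mul_assoc, mul_smul_comm, ← TensorProduct.smul_tmul', TensorProduct.tmul_smul])))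
      (B.comul b) - (1 : H) ⊗ₜ[k] (S b) ∈ balancer k A H B.src B.tgt
  antipode3 : ∀ b : H,
    (TensorProduct.lift (LinearMap.mk₂ k
        (fun x y => B.comul (S.symm y) * ((1 : H) ⊗ₜ[k] x))
        (by intros; simp [mul_add, add_mul, TensorProduct.tmul_add, TensorProduct.add_tmul, smul_mul_assoc, mul_smul_comm, ← TensorProduct.smul_tmul', TensorProduct.tmul_smul])
        (by intros; simp [mul_add, add_mul, TensorProduct.tmul_add, TensorProduct.add_tmul, smul_mul_assoc, mul_smul_comm, ← TensorProduct.smul_tmul', TensorProduct.tmul_smul])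
        (by intros; simp [mul_add, add_mul, TensorProduct.tmul_add, TensorProduct.add_tmul, smul_mul_assoc, mul_smul_comm, ← TensorProduct.smul_tmul', TensorProduct.tmul_smul])
        (by intros; simp [mul_add, add_mul, TensorProduct.tmul_add, TensorProduct.add_tmul, smul_mul_assoc, mul_smul_comm, ← TensorProduct.smul_tmul', TensorProduct.tmul_smul])))
      (B.comul b) - (S.symm b) ⊗ₜ[k] (1 : H) ∈ balancer k A H B.src B.tgt

end BialgebroidFramework

section DoubleDigraph

/-- Generators of the path algebra of the double digraph `D^db`:
vertex idempotents `⟪p,q⟫`, parallel-pair generators `(a→b ‖ c→d)`, reversed-pair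
generators `(a→b ⫽ c→d)`, and the mixed generators `(a→b | q)` and `(c→d ∤ p)`. -/
inductive DGen (V : Type) (E : V → V → Prop) : Type
  | pt : V → V → DGen V E
  | par : ∀ a b c d : V, E a b → E c d → DGen V E
  | rev : ∀ a b c d : V, E a b → E c d → DGen V E
  | lt : ∀ a b : V, E a b → V → DGen V E
  | rt : ∀ c d : V, E c d → V → DGen V E

variable (k V : Type) [Field k] [Fintype V] [DecidableEq V]
variable (E : V → V → Prop) [DecidableRel E]

open FreeAlgebra DGen in
/-- The relations presenting the Hopf algebroid `HX¹` of the digraph calculus as a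
quotient of the path algebra `kD^db` (path-algebra relations together with the
relations of the theorem on `HX¹`). -/
inductive HXRel : FreeAlgebra k (DGen V E) → FreeAlgebra k (DGen V E) → Prop
  | pt_mul (p q p' q' : V) :
      HXRel (ι k (pt (E := E) p q) * ι k (pt (E := E) p' q'))
        (if p = p' ∧ q = q' then ι k (pt (E := E) p q) else 0)
  | one_eq : HXRel 1 (∑ p : V, ∑ q : V, ι k (pt (E := E) p q))
  | par_norm (a b c d : V) (hab : E a b) (hcd : E c d) :
      HXRel (ι k (par a b c d hab hcd))
        (ι k (pt (E := E) b d) * ι k (par a b c d hab hcd) * ι k (pt (E := E) a c))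
  | rev_norm (a b c d : V) (hab : E a b) (hcd : E c d) :
      HXRel (ι k (rev a b c d hab hcd))
        (ι k (pt (E := E) a c) * ι k (rev a b c d hab hcd) * ι k (pt (E := E) b d))
  | lt_norm (a b : V) (hab : E a b) (q : V) :
      HXRel (ι k (lt a b hab q))
        (ι k (pt (E := E) b q) * ι k (lt a b hab q) * ι k (pt (E := E) a q))
  | rt_norm (c d : V) (hcd : E c d) (p : V) :
      HXRel (ι k (rt c d hcd p))
        (ι k (pt (E := E) p c) * ι k (rt c d hcd p) * ι k (pt (E := E) p d))
  | h1a (q a b p : V) (hab : E a b) (hpb : E p b) :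
      HXRel (∑ i : V, if h : E q i then
          ι k (rev a b q i hab h) * ι k (par p b q i hpb h) else 0)
        (if a = p then ι k (pt (E := E) a q) else 0)
  | h1b (q a b p : V) (hab : E a b) (hpb : E p b) :
      HXRel (∑ i : V, if h : E q i then
          ι k (rev q i a b h hab) * ι k (par q i p b h hpb) else 0)
        (if a = p then ι k (pt (E := E) a q) else 0)
  | h2a (q d a p : V) (hda : E d a) (hdp : E d p) :
      HXRel (∑ i : V, if h : E i q then
          ι k (par d a i q hda h) * ι k (rev d p i q hdp h) else 0)
        (if a = p then ι k (pt (E := E) a q) else 0)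
  | h2b (q d a p : V) (hda : E d a) (hdp : E d p) :
      HXRel (∑ i : V, if h : E i q then
          ι k (par i q d a h hda) * ι k (rev i q d p h hdp) else 0)
        (if a = p then ι k (pt (E := E) a q) else 0)
  | h3a (s t q : V) (hst : E s t) :
      HXRel (ι k (rt s t hst q))
        (∑ i : V, if h : E q i then
          ι k (rev q i s t h hst) * ι k (lt q i h t) else 0)
  | h3b (s t q : V) (hst : E s t) :
      HXRel (∑ i : V, if h : E i q then
          ι k (par s t i q hst h) * ι k (rt i q h s) else 0)
        (ι k (lt s t hst q))

open FreeAlgebra DGen in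
/-- The expression `𝐏(p,q,r;a,b)` of the paper. -/
noncomputable def Pexpr (p q r : V) (hpq : E p q) (hqr : E q r) (a b : V) :
    FreeAlgebra k (DGen V E) :=
  (∑ i : V, if h : E a i ∧ E i b then
      ι k (par q r i b hqr h.2) * ι k (par p q a i hpq h.1) else 0) -
  (if hab : E a b then
      ι k (lt q r hqr b) * ι k (par p q a b hpq hab) +
        ι k (par q r a b hqr hab) * ι k (lt p q hpq a)
    else 0)

open FreeAlgebra DGen in
/-- The expression `𝐐(p,q,r;a,b)` of the paper. -/
noncomputable def Qexpr (p q r : V) (hpq : E p q) (hqr : E q r) (a b : V) :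
    FreeAlgebra k (DGen V E) :=
  (∑ i : V, if h : E a i ∧ E i b then
      ι k (rev a i p q h.1 hpq) * ι k (rev i b q r h.2 hqr) else 0) +
  (if hab : E a b then
      ι k (rev a b p q hab hpq) * ι k (rt q r hqr b) +
        ι k (rt p q hpq a) * ι k (rev a b q r hab hqr)
    else 0)

open FreeAlgebra DGen in
/-- The relations presenting the Hopf algebroid `DX` for the digraph calculus with
`Ω²_top`: the relations of `HX¹` together with the square and triangle relations. -/
inductive DXRel : FreeAlgebra k (DGen V E) → FreeAlgebra k (DGen V E) → Prop
  | hx {x y : FreeAlgebra k (DGen V E)} : HXRel k V E x y → DXRel x y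
  | sq1 (p q q' r c : V) (hpq : E p q) (hqr : E q r) (hpq' : E p q') (hq'r : E q' r) :
      DXRel (ι k (lt q r hqr c) * ι k (lt p q hpq c))
        (ι k (lt q' r hq'r c) * ι k (lt p q' hpq' c))
  | sq1' (p q q' r c : V) (hpq : E p q) (hqr : E q r) (hpq' : E p q') (hq'r : E q' r) :
      DXRel (ι k (rt p q hpq c) * ι k (rt q r hqr c))
        (ι k (rt p q' hpq' c) * ι k (rt q' r hq'r c))
  | sq2 (p q q' r a b : V) (hpq : E p q) (hqr : E q r) (hpq' : E p q') (hq'r : E q' r) :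
      DXRel (Pexpr k V E p q r hpq hqr a b) (Pexpr k V E p q' r hpq' hq'r a b)
  | sq2' (p q q' r a b : V) (hpq : E p q) (hqr : E q r) (hpq' : E p q') (hq'r : E q' r) :
      DXRel (Qexpr k V E p q r hpq hqr a b) (Qexpr k V E p q' r hpq' hq'r a b)
  | tri1 (p q r c : V) (hpq : E p q) (hqr : E q r) (hpr : E p r) :
      DXRel (ι k (lt q r hqr c) * ι k (lt p q hpq c)) (-(ι k (lt p r hpr c)))
  | tri1' (p q r c : V) (hpq : E p q) (hqr : E q r) (hpr : E p r) :
      DXRel (ι k (rt p q hpq c) * ι k (rt q r hqr c)) (ι k (rt p r hpr c))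
  | tri2 (p q r a b : V) (hpq : E p q) (hqr : E q r) (hpr : E p r) :
      DXRel (Pexpr k V E p q r hpq hqr a b)
        (if h : E a b then ι k (par p r a b hpr h) else 0)
  | tri2' (p q r a b : V) (hpq : E p q) (hqr : E q r) (hpr : E p r) :
      DXRel (Qexpr k V E p q r hpq hqr a b)
        (if h : E a b then ι k (rev a b p r h hpr) else 0)

open FreeAlgebra DGen in
/-- Pins for the bialgebroid structure carried by a quotient of the path algebra of
the double digraph (the structure maps of Theorem `HX¹`/Corollary on the digraph
bialgebroid), relative to a map `gen` interpreting the generators. -/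
def IsDoubleDigraphBialgebroid (W : Type) [Ring W] [Algebra k W]
    (gen : DGen V E → W) (B : LeftBialgebroid k (V → k) W) : Prop :=
  (∀ p : V, B.src (Pi.single p 1) = ∑ q : V, gen (pt (E := E) p q)) ∧
  (∀ p : V, B.tgt (Pi.single p 1) = ∑ q : V, gen (pt (E := E) q p)) ∧
  (∀ p q : V, B.counit (gen (pt (E := E) p q)) =
    if p = q then Pi.single p (1 : k) else 0) ∧
  (∀ (a b c d : V) (hab : E a b) (hcd : E c d),
    B.counit (gen (par a b c d hab hcd)) =
      (if a = c ∧ b = d then Pi.single b (1 : k) else 0) ∧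
    B.counit (gen (rev a b c d hab hcd)) =
      (if a = c ∧ b = d then Pi.single a (1 : k) else 0)) ∧
  (∀ (a b : V) (hab : E a b) (q : V),
    B.counit (gen (lt a b hab q)) = 0 ∧ B.counit (gen (rt a b hab q)) = 0) ∧
  (∀ p q : V,
    B.comul (gen (pt (E := E) p q)) -
        (∑ i : V, gen (pt (E := E) p i) ⊗ₜ[k] gen (pt (E := E) i q))
      ∈ balancer k (V → k) W B.src B.tgt) ∧
  (∀ (a b c d : V) (hab : E a b) (hcd : E c d),
    B.comul (gen (par a b c d hab hcd)) -
        (∑ s : V, ∑ t : V, if h : E s t then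
          gen (par a b s t hab h) ⊗ₜ[k] gen (par s t c d h hcd) else 0)
      ∈ balancer k (V → k) W B.src B.tgt ∧
    B.comul (gen (rev a b c d hab hcd)) -
        (∑ s : V, ∑ t : V, if h : E s t then
          gen (rev a b s t hab h) ⊗ₜ[k] gen (rev s t c d h hcd) else 0)
      ∈ balancer k (V → k) W B.src B.tgt) ∧
  (∀ (a b : V) (hab : E a b) (c : V),
    B.comul (gen (lt a b hab c)) -
        ((∑ s : V, ∑ t : V, if h : E s t then
            gen (par a b s t hab h) ⊗ₜ[k] gen (lt s t h c) else 0) +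
          ∑ t : V, gen (lt a b hab t) ⊗ₜ[k] gen (pt (E := E) t c))
      ∈ balancer k (V → k) W B.src B.tgt ∧
    B.comul (gen (rt a b hab c)) -
        ((∑ s : V, ∑ t : V, if h : E s t then
            gen (rt s t h c) ⊗ₜ[k] gen (rev s t a b h hab) else 0) +
          ∑ t : V, gen (pt (E := E) c t) ⊗ₜ[k] gen (rt a b hab t))
      ∈ balancer k (V → k) W B.src B.tgt)

end DoubleDigraph

section FundamentalGroupoid

/-- Generators of the fundamental groupoid `Π_D` of a digraph. -/
inductive PiGen (V : Type) (E : V → V → Prop) : Type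
  | id : V → PiGen V E
  | fwd : ∀ a b : V, E a b → PiGen V E
  | bwd : ∀ a b : V, E a b → PiGen V E

variable (k V : Type) [Field k] [Fintype V] [DecidableEq V] (E : V → V → Prop)

open FreeAlgebra in
/-- The defining relations of the groupoid algebra `kΠ_D` of the fundamental groupoid
of a digraph. -/
inductive PiRel : FreeAlgebra k (PiGen V E) → FreeAlgebra k (PiGen V E) → Prop
  | idem (p q : V) :
      PiRel (ι k (PiGen.id p) * ι k (PiGen.id q))
        (if p = q then ι k (PiGen.id (E := E) p) else 0)
  | unit : PiRel 1 (∑ p : V, ι k (PiGen.id (E := E) p))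
  | fwd_norm (a b : V) (h : E a b) :
      PiRel (ι k (PiGen.fwd a b h))
        (ι k (PiGen.id (E := E) b) * ι k (PiGen.fwd a b h) * ι k (PiGen.id (E := E) a))
  | bwd_norm (a b : V) (h : E a b) :
      PiRel (ι k (PiGen.bwd a b h))
        (ι k (PiGen.id (E := E) a) * ι k (PiGen.bwd a b h) * ι k (PiGen.id (E := E) b))
  | inv_left (a b : V) (h : E a b) :
      PiRel (ι k (PiGen.bwd a b h) * ι k (PiGen.fwd a b h)) (ι k (PiGen.id (E := E) a))
  | inv_right (a b : V) (h : E a b) :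
      PiRel (ι k (PiGen.fwd a b h) * ι k (PiGen.bwd a b h)) (ι k (PiGen.id (E := E) b))
  | triangle (p q r : V) (hpq : E p q) (hqr : E q r) (hpr : E p r) :
      PiRel (ι k (PiGen.fwd q r hqr) * ι k (PiGen.fwd p q hpq)) (ι k (PiGen.fwd p r hpr))
  | square (p q q' r : V) (hpq : E p q) (hqr : E q r) (hpq' : E p q') (hq'r : E q' r) :
      PiRel (ι k (PiGen.fwd q r hqr) * ι k (PiGen.fwd p q hpq))
        (ι k (PiGen.fwd q' r hq'r) * ι k (PiGen.fwd p q' hpq'))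

/-- The groupoid algebra `kΠ_D`. -/
abbrev PiAlgebra : Type := RingQuot (PiRel k V E)

/-- The canonical projection onto `kΠ_D`. -/
noncomputable def piMk : FreeAlgebra k (PiGen V E) →ₐ[k] PiAlgebra k V E :=
  RingQuot.mkAlgHom k (PiRel k V E)

open FreeAlgebra in
/-- Pins for the groupoid-algebra Hopf algebroid structure on `kΠ_D`. -/
def IsPiAlgebroid [DecidableRel E] (B : LeftBialgebroid k (V → k) (PiAlgebra k V E)) :
    Prop :=
  (∀ p : V, B.src (Pi.single p 1) = piMk k V E (ι k (PiGen.id (E := E) p)) ∧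
    B.tgt (Pi.single p 1) = piMk k V E (ι k (PiGen.id (E := E) p))) ∧
  (∀ p : V, B.counit (piMk k V E (ι k (PiGen.id (E := E) p))) = Pi.single p 1) ∧
  (∀ (a b : V) (h : E a b),
    B.counit (piMk k V E (ι k (PiGen.fwd a b h))) = Pi.single b 1 ∧
    B.counit (piMk k V E (ι k (PiGen.bwd a b h))) = Pi.single a 1) ∧
  (∀ g : PiGen V E,
    B.comul (piMk k V E (ι k g)) - (piMk k V E (ι k g)) ⊗ₜ[k] (piMk k V E (ι k g))
      ∈ balancer k (V → k) (PiAlgebra k V E) B.src B.tgt)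

end FundamentalGroupoid

open FreeAlgebra in
/-- The relations of `DX` together with the isotropy relations `s(f_p) = t(f_p)`. -/
inductive DXIsoRel (k V : Type) [Field k] [Fintype V] [DecidableEq V]
    (E : V → V → Prop) [DecidableRel E] :
    FreeAlgebra k (DGen V E) → FreeAlgebra k (DGen V E) → Prop
  | dx {x y : FreeAlgebra k (DGen V E)} : DXRel k V E x y → DXIsoRel k V E x y
  | iso (p : V) : DXIsoRel k V E (∑ q : V, ι k (DGen.pt (E := E) p q))
      (∑ q : V, ι k (DGen.pt (E := E) q p))

/-!
Multiplying the isotropy relation `s(f_p) = t(f_p)` by `⟪p,q⟫` kills `⟪p,q⟫` for `p ≠ q`. Every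
other generator of `DX` is sandwiched between two of these idempotents, so that in the isotropy
quotient only `(a→b ‖ a→b)` and `(a→b ⫽ a→b)` survive; a mixed generator could only survive on a
loop. Hence the quotient map factors through the diagonal projection onto the path algebra of `Π_D`.
This projection turns the relations of `DX` into consequences of those of `Π_D`, where the triangle
and square relations for reversed arrows follow by uniqueness of inverses; conversely, every
defining relation of `Π_D` is the projection of a relation of `DX`. The surviving generators are
group-like, and compatibility with the counits and comultiplications need only be tested on them.
-/

lemma submodule_eq_top_of_adjoin_eq_top {k H : Type*} [CommSemiring k] [Semiring H] [Algebra k H]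
    {S : Set H} (hS : Algebra.adjoin k S = ⊤) {P : Submodule k H} (one_mem : 1 ∈ P)
    (mul_mem : ∀ g ∈ S, ∀ h ∈ P, g * h ∈ P) : P = ⊤ := by
  have stable : ∀ x ∈ Algebra.adjoin k S, ∀ h ∈ P, x * h ∈ P := by
    intro x hx
    induction hx using Algebra.adjoin_induction with
    | mem g hg => exact mul_mem g hg
    | algebraMap c => exact fun h hh => by simpa [Algebra.smul_def] using P.smul_mem c hh
    | add x y _ _ hx hy => exact fun h hh => by simpa [add_mul] using P.add_mem (hx h hh) (hy h hh)
    | mul x y _ _ hx hy => exact fun h hh => by simpa [mul_assoc] using hx _ (hy h hh)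
  exact Submodule.eq_top_iff'.2 fun x => by simpa using stable x (hS ▸ Algebra.mem_top) 1 one_mem

section RingQuot

variable {k A B : Type*} [CommSemiring k] [Semiring A] [Algebra k A] [Semiring B] [Algebra k B]
  {r : A → A → Prop} {s : B → B → Prop} (f : A →ₐ[k] B) (g : B →ₐ[k] A)
  (hf : ∀ ⦃x y⦄, r x y → RingQuot.mkAlgHom k s (f x) = RingQuot.mkAlgHom k s (f y))
  (hg : ∀ ⦃x y⦄, s x y → RingQuot.mkAlgHom k r (g x) = RingQuot.mkAlgHom k r (g y))
  (hgf : ∀ x, RingQuot.mkAlgHom k r (g (f x)) = RingQuot.mkAlgHom k r x)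
  (hfg : ∀ y, RingQuot.mkAlgHom k s (f (g y)) = RingQuot.mkAlgHom k s y)

/-- The isomorphism between two quotients of algebras by relations that is induced by algebra
homomorphisms which preserve the relations and are mutually inverse modulo them. -/
noncomputable def ringQuotAlgEquiv : RingQuot r ≃ₐ[k] RingQuot s :=
  let F := RingQuot.liftAlgHom k ⟨(RingQuot.mkAlgHom k s).comp f, hf⟩
  let G := RingQuot.liftAlgHom k ⟨(RingQuot.mkAlgHom k r).comp g, hg⟩
  have hF (x) : F (RingQuot.mkAlgHom k r x) = RingQuot.mkAlgHom k s (f x) :=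
    RingQuot.liftAlgHom_mkAlgHom_apply ..
  have hG (y) : G (RingQuot.mkAlgHom k s y) = RingQuot.mkAlgHom k r (g y) :=
    RingQuot.liftAlgHom_mkAlgHom_apply ..
  AlgEquiv.ofAlgHom F G
    (RingQuot.ringQuot_ext' _ _ _ <| AlgHom.ext fun y =>
      (congrArg F (hG y)).trans ((hF _).trans (hfg y)))
    (RingQuot.ringQuot_ext' _ _ _ <| AlgHom.ext fun x =>
      (congrArg G (hF x)).trans ((hG _).trans (hgf x)))

lemma ringQuotAlgEquiv_mkAlgHom (x : A) :
    ringQuotAlgEquiv f g hf hg hgf hfg (RingQuot.mkAlgHom k r x) = RingQuot.mkAlgHom k s (f x) :=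
  RingQuot.liftAlgHom_mkAlgHom_apply ..

end RingQuot

lemma eq_of_local_inverses {M : Type*} [Semigroup M] {u v w e f : M} (hvu : v * u = e)
    (huw : u * w = f) (hvf : v * f = v) (hew : e * w = w) : v = w := by
  rw [← hvf, ← huw, ← mul_assoc, hvu, hew]

lemma sum_sum_dite_eq_single {I M : Type*} [Fintype I] [AddCommMonoid M] {R : I → I → Prop}
    [DecidableRel R] {x : ∀ i j, R i j → M} {a b : I} (hab : R a b)
    (hx : ∀ i j h, ¬(a = i ∧ b = j) → x i j h = 0) :
    (∑ i, ∑ j, if h : R i j then x i j h else 0) = x a b hab := by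
  rw [Fintype.sum_eq_single a, Fintype.sum_eq_single b, dif_pos hab]
  · exact fun j hj => dite_eq_right_iff.2 fun h => hx a j h fun h' => hj h'.2.symm
  · exact fun i hi => Finset.sum_eq_zero fun j _ =>
      dite_eq_right_iff.2 fun h => hx i j h fun h' => hi h'.1.symm

lemma ne_or_ne_of_edge {V : Type*} {E : V → V → Prop} (hloop : ∀ v, ¬E v v) {a b : V}
    (hab : E a b) (q : V) : a ≠ q ∨ b ≠ q := by
  by_contra! h
  obtain ⟨rfl, rfl⟩ := h
  exact hloop _ hab

section Bialgebroids

variable {k A H H' : Type} [CommRing k] [Ring A] [Ring H] [Ring H'] [Algebra k A] [Algebra k H]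
  [Algebra k H'] {s : A →ₐ[k] H} {t : A →ₗ[k] H} {s' : A →ₐ[k] H'} {t' : A →ₗ[k] H'}

lemma mul_right_mem_balancer {z : H ⊗[k] H} (hz : z ∈ balancer k A H s t) (w : H ⊗[k] H) :
    z * w ∈ balancer k A H s t := by
  suffices h : balancer k A H s t ≤ (balancer k A H s t).comap (LinearMap.mulRight k w) from h hz
  refine Submodule.span_le.2 ?_
  rintro _ ⟨a, x, y, rfl⟩
  rw [SetLike.mem_coe, Submodule.mem_comap, LinearMap.mulRight_apply]
  induction w with
  | zero => simp
  | tmul u v => exact Submodule.subset_span ⟨a, x * u, y * v, by simp [sub_mul, mul_assoc]⟩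
  | add u v hu hv => simpa only [mul_add] using Submodule.add_mem _ hu hv

-- The hypothesis puts `w` in the Takeuchi product: only there is left multiplication well defined
-- on `H ⊗_A H`.
lemma mul_left_mem_balancer {w : H ⊗[k] H}
    (hw : ∀ a, w * (t a ⊗ₜ[k] 1 - 1 ⊗ₜ[k] s a) ∈ balancer k A H s t) {z : H ⊗[k] H}
    (hz : z ∈ balancer k A H s t) : w * z ∈ balancer k A H s t := by
  suffices h : balancer k A H s t ≤ (balancer k A H s t).comap (LinearMap.mulLeft k w) from h hz
  refine Submodule.span_le.2 ?_
  rintro _ ⟨a, x, y, rfl⟩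
  have factor : (t a * x) ⊗ₜ[k] y - x ⊗ₜ[k] (s a * y) =
      (t a ⊗ₜ[k] 1 - 1 ⊗ₜ[k] s a) * x ⊗ₜ[k] y := by
    simp [sub_mul]
  rw [factor, SetLike.mem_coe, Submodule.mem_comap, LinearMap.mulLeft_apply, ← mul_assoc]
  exact mul_right_mem_balancer (hw a) _

lemma map_mem_balancer {f : H →ₐ[k] H'} (hs : ∀ a, f (s a) = s' a) (ht : ∀ a, f (t a) = t' a)
    {z : H ⊗[k] H} (hz : z ∈ balancer k A H s t) :
    TensorProduct.map f.toLinearMap f.toLinearMap z ∈ balancer k A H' s' t' := by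
  suffices h : balancer k A H s t ≤ (balancer k A H' s' t').comap
      (TensorProduct.map f.toLinearMap f.toLinearMap) from h hz
  refine Submodule.span_le.2 ?_
  rintro _ ⟨a, x, y, rfl⟩
  exact Submodule.subset_span ⟨a, f x, f y, by simp [hs, ht]⟩

lemma comul_mul_mem_balancer_of_groupLike {B : LeftBialgebroid k A H} {g : H}
    (hg : B.comul g - g ⊗ₜ[k] g ∈ balancer k A H B.src B.tgt) {a : A} {c : k}
    (hsrc : g * B.src a = c • g) (htgt : g * B.tgt a = c • g) :
    B.comul g * (B.tgt a ⊗ₜ[k] 1 - 1 ⊗ₜ[k] B.src a) ∈ balancer k A H B.src B.tgt := by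
  have cancel : g ⊗ₜ[k] g * (B.tgt a ⊗ₜ[k] 1 - 1 ⊗ₜ[k] B.src a) = 0 := by
    simp [mul_sub, hsrc, htgt, smul_tmul']
  have mem := mul_right_mem_balancer hg (B.tgt a ⊗ₜ[k] 1 - 1 ⊗ₜ[k] B.src a)
  rwa [sub_mul, cancel, sub_zero] at mem

section Generators

variable {B : LeftBialgebroid k A H} {B' : LeftBialgebroid k A H'} {f : H →ₐ[k] H'} {S : Set H}
  (hS : Algebra.adjoin k S = ⊤) (hsrc : ∀ a, f (B.src a) = B'.src a)
include hS hsrc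

lemma counit_map_of_adjoin_eq_top
    (hcounit : ∀ g ∈ S, ∀ a, B'.counit (f (g * B.src a)) = B.counit (g * B.src a)) (h : H) :
    B'.counit (f h) = B.counit h := by
  suffices LinearMap.eqLocus (B'.counit ∘ₗ f.toLinearMap) B.counit = ⊤ from
    LinearMap.mem_eqLocus.1 (this.ge (Submodule.mem_top (x := h)))
  refine submodule_eq_top_of_adjoin_eq_top hS (by simp [B.counit_one, B'.counit_one]) ?_
  intro g hg h hh
  simp only [LinearMap.mem_eqLocus, LinearMap.comp_apply, AlgHom.toLinearMap_apply] at hh ⊢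
  rw [map_mul, B'.counit_mul, hh, ← hsrc, ← map_mul, hcounit g hg, ← B.counit_mul]

lemma map_comul_sub_mem_of_adjoin_eq_top (htgt : ∀ a, f (B.tgt a) = B'.tgt a)
    (htakeuchi : ∀ g ∈ S, ∀ a, B'.comul (f g) * (B'.tgt a ⊗ₜ[k] 1 - 1 ⊗ₜ[k] B'.src a) ∈
      balancer k A H' B'.src B'.tgt)
    (hcomul : ∀ g ∈ S, TensorProduct.map f.toLinearMap f.toLinearMap (B.comul g) - B'.comul (f g) ∈
      balancer k A H' B'.src B'.tgt) (h : H) :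
    TensorProduct.map f.toLinearMap f.toLinearMap (B.comul h) - B'.comul (f h) ∈
      balancer k A H' B'.src B'.tgt := by
  set F := TensorProduct.map f.toLinearMap f.toLinearMap
  have F_mul (z w) : F (z * w) = F z * F w := map_mul (Algebra.TensorProduct.map f f) z w
  suffices (balancer k A H' B'.src B'.tgt).comap (F ∘ₗ B.comul - B'.comul ∘ₗ f.toLinearMap) = ⊤ from
    this.ge (Submodule.mem_top (x := h))
  refine submodule_eq_top_of_adjoin_eq_top hS ?_ ?_
  · simpa [F] using
      Submodule.sub_mem _ (map_mem_balancer (f := f) hsrc htgt B.comul_one) B'.comul_one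
  · intro g hg h hh
    have telescope : F (B.comul (g * h)) - B'.comul (f (g * h)) =
        F (B.comul (g * h) - B.comul g * B.comul h) +
          (F (B.comul g) - B'.comul (f g)) * F (B.comul h) +
          B'.comul (f g) * (F (B.comul h) - B'.comul (f h)) -
          (B'.comul (f g * f h) - B'.comul (f g) * B'.comul (f h)) := by
      rw [map_sub F, F_mul, map_mul f]
      noncomm_ring
    simp only [Submodule.mem_comap, LinearMap.sub_apply, LinearMap.comp_apply,
      AlgHom.toLinearMap_apply] at hh ⊢
    rw [telescope]
    exact Submodule.sub_mem _ (Submodule.add_mem _ (Submodule.add_mem _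
      (map_mem_balancer hsrc htgt (B.comul_mul g h)) (mul_right_mem_balancer (hcomul g hg) _))
      (mul_left_mem_balancer (htakeuchi g hg) hh)) (B'.comul_mul _ _)

end Generators

end Bialgebroids

section DiagonalProjection

open FreeAlgebra DGen

/-- The homomorphism from the path algebra of the double digraph to that of `Π_D` which identifies
a generator indexed by twice the same vertex or edge with that vertex or edge, and kills every other
generator. -/
def diagProj (k : Type*) [CommSemiring k] {V : Type} [DecidableEq V] {E : V → V → Prop} :
    FreeAlgebra k (DGen V E) →ₐ[k] FreeAlgebra k (PiGen V E) :=
  lift k fun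
    | pt p q => if p = q then ι k (.id p) else 0
    | par a b c d hab _ => if a = c ∧ b = d then ι k (.fwd a b hab) else 0
    | rev a b c d hab _ => if a = c ∧ b = d then ι k (.bwd a b hab) else 0
    | lt .. => 0
    | rt .. => 0

/-- The homomorphism in the opposite direction to `diagProj` which doubles the index of each
generator. -/
def diagIncl (k : Type*) [CommSemiring k] {V : Type} {E : V → V → Prop} :
    FreeAlgebra k (PiGen V E) →ₐ[k] FreeAlgebra k (DGen V E) :=
  lift k fun
    | .id p => ι k (pt p p)
    | .fwd a b h => ι k (par a b a b h h)
    | .bwd a b h => ι k (rev a b a b h h)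

section Generators

variable {k : Type*} [CommSemiring k] {V : Type} {E : V → V → Prop}

@[simp] lemma diagIncl_id (p : V) : diagIncl k (ι k (.id p)) = ι k (pt (E := E) p p) :=
  lift_ι_apply ..

@[simp] lemma diagIncl_fwd {a b : V} (h : E a b) :
    diagIncl k (ι k (.fwd a b h)) = ι k (par a b a b h h) :=
  lift_ι_apply ..

@[simp] lemma diagIncl_bwd {a b : V} (h : E a b) :
    diagIncl k (ι k (.bwd a b h)) = ι k (rev a b a b h h) :=
  lift_ι_apply ..

variable [DecidableEq V]

@[simp] lemma diagProj_pt (p q : V) :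
    diagProj k (ι k (pt (E := E) p q)) = if p = q then ι k (.id p) else 0 :=
  lift_ι_apply ..

@[simp] lemma diagProj_par {a b c d : V} (hab : E a b) (hcd : E c d) :
    diagProj k (ι k (par a b c d hab hcd)) =
      if a = c ∧ b = d then ι k (.fwd a b hab) else 0 :=
  lift_ι_apply ..

@[simp] lemma diagProj_rev {a b c d : V} (hab : E a b) (hcd : E c d) :
    diagProj k (ι k (rev a b c d hab hcd)) =
      if a = c ∧ b = d then ι k (.bwd a b hab) else 0 :=
  lift_ι_apply ..

@[simp] lemma diagProj_lt {a b : V} (hab : E a b) (q : V) :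
    diagProj k (ι k (lt a b hab q)) = 0 :=
  lift_ι_apply ..

@[simp] lemma diagProj_rt {a b : V} (hab : E a b) (q : V) :
    diagProj k (ι k (rt a b hab q)) = 0 :=
  lift_ι_apply ..

@[simp] lemma diagProj_diagIncl (y : FreeAlgebra k (PiGen V E)) :
    diagProj k (diagIncl k y) = y := by
  suffices (diagProj k).comp (diagIncl k) = AlgHom.id k (FreeAlgebra k (PiGen V E)) from
    DFunLike.congr_fun this y
  ext (_ | _ | _) <;> simp

end Generators

variable {k V : Type} [Field k] [Fintype V] [DecidableEq V] {E : V → V → Prop} [DecidableRel E]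

lemma diagProj_Pexpr {p q r : V} (hpq : E p q) (hqr : E q r) (a b : V) :
    diagProj k (Pexpr k V E p q r hpq hqr a b) =
      if a = p ∧ b = r then ι k (.fwd q r hqr) * ι k (.fwd p q hpq) else 0 := by
  simp only [Pexpr, map_sub, map_sum, apply_dite (diagProj k), map_mul, map_add, map_zero,
    diagProj_par, diagProj_lt, zero_mul, mul_zero, add_zero, dite_eq_ite, ite_self, sub_zero]
  rw [Fintype.sum_eq_single q fun i hi => by simp [hi.symm]]
  rcases eq_or_ne a p with rfl | hap <;> rcases eq_or_ne b r with rfl | hbr <;>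
    simp [*, Ne.symm]

lemma diagProj_Qexpr {p q r : V} (hpq : E p q) (hqr : E q r) (a b : V) :
    diagProj k (Qexpr k V E p q r hpq hqr a b) =
      if a = p ∧ b = r then ι k (.bwd p q hpq) * ι k (.bwd q r hqr) else 0 := by
  simp only [Qexpr, map_sum, apply_dite (diagProj k), map_mul, map_add, map_zero,
    diagProj_rev, diagProj_rt, zero_mul, mul_zero, add_zero, dite_eq_ite, ite_self]
  rw [Fintype.sum_eq_single q fun i hi => by simp [hi]]
  rcases eq_or_ne a p with rfl | hap <;> rcases eq_or_ne b r with rfl | hbr <;>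
    simp [*, Ne.symm]

lemma diagProj_sum_rev_mul_par_left (q : V) {a b p : V} (hab : E a b) (hpb : E p b) :
    diagProj k (∑ i : V, if h : E q i then
        ι k (rev a b q i hab h) * ι k (par p b q i hpb h) else 0) =
      if a = q ∧ p = q then ι k (.bwd a b hab) * ι k (.fwd p b hpb) else 0 := by
  simp only [map_sum, apply_dite (diagProj k), map_mul, map_zero, diagProj_rev, diagProj_par,
    dite_eq_ite]
  rw [Fintype.sum_eq_single b fun i hi => by simp [hi.symm]]
  rcases eq_or_ne a q with rfl | haq <;> simp [*]

lemma diagProj_sum_rev_mul_par_right (q : V) {a b p : V} (hab : E a b) (hpb : E p b) :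
    diagProj k (∑ i : V, if h : E q i then
        ι k (rev q i a b h hab) * ι k (par q i p b h hpb) else 0) =
      if a = q ∧ p = q then ι k (.bwd a b hab) * ι k (.fwd p b hpb) else 0 := by
  simp only [map_sum, apply_dite (diagProj k), map_mul, map_zero, diagProj_rev, diagProj_par]
  rw [Fintype.sum_eq_single b fun i hi => by simp [hi]]
  rcases eq_or_ne a q with rfl | haq <;> rcases eq_or_ne p a with rfl | hpa <;> simp [*, Ne.symm]

lemma diagProj_sum_par_mul_rev_left (q : V) {d a p : V} (hda : E d a) (hdp : E d p) :
    diagProj k (∑ i : V, if h : E i q then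
        ι k (par d a i q hda h) * ι k (rev d p i q hdp h) else 0) =
      if a = q ∧ p = q then ι k (.fwd d a hda) * ι k (.bwd d p hdp) else 0 := by
  simp only [map_sum, apply_dite (diagProj k), map_mul, map_zero, diagProj_rev, diagProj_par,
    dite_eq_ite]
  rw [Fintype.sum_eq_single d fun i hi => by simp [hi.symm]]
  rcases eq_or_ne a q with rfl | haq <;> simp [*]

lemma diagProj_sum_par_mul_rev_right (q : V) {d a p : V} (hda : E d a) (hdp : E d p) :
    diagProj k (∑ i : V, if h : E i q then
        ι k (par i q d a h hda) * ι k (rev i q d p h hdp) else 0) =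
      if a = q ∧ p = q then ι k (.fwd d a hda) * ι k (.bwd d p hdp) else 0 := by
  simp only [map_sum, apply_dite (diagProj k), map_mul, map_zero, diagProj_rev, diagProj_par]
  rw [Fintype.sum_eq_single d fun i hi => by simp [hi]]
  rcases eq_or_ne a q with rfl | haq <;> rcases eq_or_ne p a with rfl | hpa <;> simp [*, Ne.symm]

end DiagonalProjection

section IsotropyQuotient

open FreeAlgebra DGen

variable {k V : Type} [Field k] [Fintype V] [DecidableEq V] {E : V → V → Prop}

local notation "π(" g ")" => piMk k V E (ι k g)

lemma piMk_eq_of_rel {x y : FreeAlgebra k (PiGen V E)} (h : PiRel k V E x y) :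
    piMk k V E x = piMk k V E y :=
  RingQuot.mkAlgHom_rel k h

lemma sum_piMk_id : ∑ p, π(.id p) = 1 := by
  simpa only [map_one, map_sum] using (piMk_eq_of_rel (PiRel.unit (k := k) (E := E))).symm

lemma piMk_id_mul_id (p q : V) : π(.id p) * π(.id q) = if p = q then π(.id p) else 0 := by
  simpa only [map_mul, apply_ite (piMk k V E), map_zero] using
    piMk_eq_of_rel (PiRel.idem (k := k) (E := E) p q)

lemma piMk_id_mul_fwd_mul_id {a b : V} (h : E a b) :
    π(.id b) * π(.fwd a b h) * π(.id a) = π(.fwd a b h) := by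
  simpa only [map_mul] using (piMk_eq_of_rel (PiRel.fwd_norm (k := k) a b h)).symm

lemma piMk_id_mul_bwd_mul_id {a b : V} (h : E a b) :
    π(.id a) * π(.bwd a b h) * π(.id b) = π(.bwd a b h) := by
  simpa only [map_mul] using (piMk_eq_of_rel (PiRel.bwd_norm (k := k) a b h)).symm

lemma piMk_bwd_mul_fwd {a b : V} (h : E a b) : π(.bwd a b h) * π(.fwd a b h) = π(.id a) := by
  simpa only [map_mul] using piMk_eq_of_rel (PiRel.inv_left (k := k) a b h)

lemma piMk_fwd_mul_bwd {a b : V} (h : E a b) : π(.fwd a b h) * π(.bwd a b h) = π(.id b) := by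
  simpa only [map_mul] using piMk_eq_of_rel (PiRel.inv_right (k := k) a b h)

lemma piMk_fwd_mul_fwd_of_triangle {p q r : V} (hpq : E p q) (hqr : E q r) (hpr : E p r) :
    π(.fwd q r hqr) * π(.fwd p q hpq) = π(.fwd p r hpr) := by
  simpa only [map_mul] using piMk_eq_of_rel (PiRel.triangle (k := k) p q r hpq hqr hpr)

lemma piMk_fwd_mul_fwd_of_square {p q q' r : V} (hpq : E p q) (hqr : E q r) (hpq' : E p q')
    (hq'r : E q' r) :
    π(.fwd q r hqr) * π(.fwd p q hpq) = π(.fwd q' r hq'r) * π(.fwd p q' hpq') := by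
  simpa only [map_mul] using
    piMk_eq_of_rel (PiRel.square (k := k) p q q' r hpq hqr hpq' hq'r)

/-- The vertex at which a generating arrow of `Π_D` starts. -/
def PiGen.source : PiGen V E → V
  | .id p => p
  | .fwd a _ _ => a
  | .bwd _ b _ => b

lemma piMk_mul_id (g : PiGen V E) (p : V) :
    π(g) * π(.id p) = if g.source = p then π(g) else 0 := by
  match g with
  | .id q => exact piMk_id_mul_id q p
  | .fwd a b h =>
    rw [← piMk_id_mul_fwd_mul_id h, mul_assoc, piMk_id_mul_id, mul_ite, mul_zero, PiGen.source]
  | .bwd a b h =>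
    rw [← piMk_id_mul_bwd_mul_id h, mul_assoc, piMk_id_mul_id, mul_ite, mul_zero, PiGen.source]

lemma piMk_id_mul_bwd {a b : V} (h : E a b) : π(.id a) * π(.bwd a b h) = π(.bwd a b h) := by
  rw [← piMk_id_mul_bwd_mul_id h, ← mul_assoc, ← mul_assoc, piMk_id_mul_id, if_pos rfl]

lemma piMk_bwd_mul_bwd_mul_fwd_mul_fwd {p q r : V} (hpq : E p q) (hqr : E q r) :
    π(.bwd p q hpq) * π(.bwd q r hqr) * (π(.fwd q r hqr) * π(.fwd p q hpq)) = π(.id p) := by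
  rw [mul_assoc, ← mul_assoc π(.bwd q r hqr), piMk_bwd_mul_fwd, ← mul_assoc, piMk_mul_id,
    PiGen.source, if_pos rfl, piMk_bwd_mul_fwd]

lemma piMk_fwd_mul_fwd_mul_bwd_mul_bwd {p q r : V} (hpq : E p q) (hqr : E q r) :
    π(.fwd q r hqr) * π(.fwd p q hpq) * (π(.bwd p q hpq) * π(.bwd q r hqr)) = π(.id r) := by
  rw [mul_assoc, ← mul_assoc π(.fwd p q hpq), piMk_fwd_mul_bwd, ← mul_assoc, piMk_mul_id,
    PiGen.source, if_pos rfl, piMk_fwd_mul_bwd]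

lemma piMk_bwd_mul_bwd_of_triangle {p q r : V} (hpq : E p q) (hqr : E q r) (hpr : E p r) :
    π(.bwd p q hpq) * π(.bwd q r hqr) = π(.bwd p r hpr) := by
  refine eq_of_local_inverses (u := π(.fwd p r hpr)) (e := π(.id p)) (f := π(.id r))
    ?_ (piMk_fwd_mul_bwd hpr) ?_ (piMk_id_mul_bwd hpr)
  · rw [← piMk_fwd_mul_fwd_of_triangle hpq hqr hpr, piMk_bwd_mul_bwd_mul_fwd_mul_fwd]
  · rw [mul_assoc, piMk_mul_id, PiGen.source, if_pos rfl]

lemma piMk_bwd_mul_bwd_of_square {p q q' r : V} (hpq : E p q) (hqr : E q r) (hpq' : E p q')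
    (hq'r : E q' r) :
    π(.bwd p q hpq) * π(.bwd q r hqr) = π(.bwd p q' hpq') * π(.bwd q' r hq'r) := by
  refine eq_of_local_inverses (piMk_bwd_mul_bwd_mul_fwd_mul_fwd hpq hqr) (f := π(.id r)) ?_ ?_ ?_
  · rw [piMk_fwd_mul_fwd_of_square hpq hqr hpq' hq'r, piMk_fwd_mul_fwd_mul_bwd_mul_bwd]
  · rw [mul_assoc, piMk_mul_id, PiGen.source, if_pos rfl]
  · rw [← mul_assoc, piMk_id_mul_bwd]

lemma piMk_ite_bwd_mul_fwd (q : V) {a b p : V} (hab : E a b) (hpb : E p b) :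
    piMk k V E (if a = q ∧ p = q then ι k (.bwd a b hab) * ι k (.fwd p b hpb) else 0) =
      piMk k V E (diagProj k (if a = p then ι k (.pt a q) else 0)) := by
  rcases eq_or_ne a p with rfl | hap
  · rcases eq_or_ne a q with rfl | haq
    · simp [piMk_bwd_mul_fwd]
    · simp [haq]
  · rw [if_neg fun h => hap (h.1.trans h.2.symm), if_neg hap, map_zero (diagProj k)]

lemma piMk_ite_fwd_mul_bwd (q : V) {d a p : V} (hda : E d a) (hdp : E d p) :
    piMk k V E (if a = q ∧ p = q then ι k (.fwd d a hda) * ι k (.bwd d p hdp) else 0) =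
      piMk k V E (diagProj k (if a = p then ι k (.pt a q) else 0)) := by
  rcases eq_or_ne a p with rfl | hap
  · rcases eq_or_ne a q with rfl | haq
    · simp [piMk_fwd_mul_bwd]
    · simp [haq]
  · rw [if_neg fun h => hap (h.1.trans h.2.symm), if_neg hap, map_zero (diagProj k)]

variable [DecidableRel E]

lemma piMk_diagProj_eq_of_hxRel {x y : FreeAlgebra k (DGen V E)} (h : HXRel k V E x y) :
    piMk k V E (diagProj k x) = piMk k V E (diagProj k y) := by
  cases h with
  | pt_mul p q p' q' =>
    rcases eq_or_ne p q with rfl | hpq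
    · rcases eq_or_ne p p' with rfl | hpp'
      · rcases eq_or_ne p q' with rfl | hpq' <;> simp [piMk_id_mul_id, *]
      · simp [apply_ite (piMk k V E), piMk_id_mul_id, *]
    · simp [apply_ite (diagProj k), *]
  | one_eq => simp [sum_piMk_id]
  | par_norm a b c d hab hcd =>
    by_cases h : a = c ∧ b = d
    · simp [h, piMk_id_mul_fwd_mul_id]
    · simp [h]
  | rev_norm a b c d hab hcd =>
    by_cases h : a = c ∧ b = d
    · simp [h, piMk_id_mul_bwd_mul_id]
    · simp [h]
  | lt_norm | rt_norm => simp
  | h1a q a b p hab hpb =>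
    rw [diagProj_sum_rev_mul_par_left, piMk_ite_bwd_mul_fwd]
  | h1b q a b p hab hpb =>
    rw [diagProj_sum_rev_mul_par_right, piMk_ite_bwd_mul_fwd]
  | h2a q d a p hda hdp =>
    rw [diagProj_sum_par_mul_rev_left, piMk_ite_fwd_mul_bwd]
  | h2b q d a p hda hdp =>
    rw [diagProj_sum_par_mul_rev_right, piMk_ite_fwd_mul_bwd]
  | h3a | h3b => simp [apply_dite (diagProj k)]

lemma piMk_diagProj_eq_of_dxRel {x y : FreeAlgebra k (DGen V E)} (h : DXRel k V E x y) :
    piMk k V E (diagProj k x) = piMk k V E (diagProj k y) := by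
  cases h with
  | hx h => exact piMk_diagProj_eq_of_hxRel h
  | sq1 | sq1' | tri1 | tri1' => simp
  | sq2 p q q' r a b hpq hqr hpq' hq'r =>
    rw [diagProj_Pexpr, diagProj_Pexpr]
    split_ifs
    · simp only [map_mul, piMk_fwd_mul_fwd_of_square hpq hqr hpq' hq'r]
    · rfl
  | sq2' p q q' r a b hpq hqr hpq' hq'r =>
    rw [diagProj_Qexpr, diagProj_Qexpr]
    split_ifs
    · simp only [map_mul, piMk_bwd_mul_bwd_of_square hpq hqr hpq' hq'r]
    · rfl
  | tri2 p q r a b hpq hqr hpr =>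
    rw [diagProj_Pexpr]
    by_cases h : a = p ∧ b = r
    · obtain ⟨rfl, rfl⟩ := h
      simp [hpr, piMk_fwd_mul_fwd_of_triangle hpq hqr hpr]
    · simp [apply_dite (diagProj k), h, eq_comm (a := p), eq_comm (a := r)]
  | tri2' p q r a b hpq hqr hpr =>
    rw [diagProj_Qexpr]
    by_cases h : a = p ∧ b = r
    · obtain ⟨rfl, rfl⟩ := h
      simp [hpr, piMk_bwd_mul_bwd_of_triangle hpq hqr hpr]
    · simp [apply_dite (diagProj k), h]

lemma piMk_diagProj_eq_of_dxIsoRel {x y : FreeAlgebra k (DGen V E)} (h : DXIsoRel k V E x y) :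
    piMk k V E (diagProj k x) = piMk k V E (diagProj k y) := by
  cases h with
  | dx h => exact piMk_diagProj_eq_of_dxRel h
  | iso p => simp

lemma PiRel.exists_dxIsoRel {x y : FreeAlgebra k (PiGen V E)} (h : PiRel k V E x y) :
    ∃ x' y', DXIsoRel k V E x' y' ∧ diagProj k x' = x ∧ diagProj k y' = y := by
  cases h with
  | idem p q => exact ⟨_, _, .dx (.hx (.pt_mul p p q q)), by simp, by simp [apply_ite (diagProj k)]⟩
  | unit => exact ⟨_, _, .dx (.hx .one_eq), by simp, by simp⟩
  | fwd_norm a b h => exact ⟨_, _, .dx (.hx (.par_norm a b a b h h)), by simp, by simp⟩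
  | bwd_norm a b h => exact ⟨_, _, .dx (.hx (.rev_norm a b a b h h)), by simp, by simp⟩
  | inv_left a b h =>
    exact ⟨_, _, .dx (.hx (.h1a a a b a h h)), by simp [diagProj_sum_rev_mul_par_left, -map_sum],
      by simp⟩
  | inv_right a b h =>
    exact ⟨_, _, .dx (.hx (.h2a b a b b h h)), by simp [diagProj_sum_par_mul_rev_left, -map_sum],
      by simp⟩
  | triangle p q r hpq hqr hpr =>
    exact ⟨_, _, .dx (.tri2 p q r p r hpq hqr hpr), by simp [diagProj_Pexpr], by simp [hpr]⟩
  | square p q q' r hpq hqr hpq' hq'r =>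
    exact ⟨_, _, .dx (.sq2 p q q' r p r hpq hqr hpq' hq'r), by simp [diagProj_Pexpr],
      by simp [diagProj_Pexpr]⟩

variable (k E) in
/-- The canonical projection onto the isotropy quotient of `DX`. -/
noncomputable abbrev isotropyMk :
    FreeAlgebra k (DGen V E) →ₐ[k] RingQuot (DXIsoRel k V E) :=
  RingQuot.mkAlgHom k (DXIsoRel k V E)

lemma isotropyMk_eq_of_rel {x y : FreeAlgebra k (DGen V E)} (h : DXIsoRel k V E x y) :
    isotropyMk k E x = isotropyMk k E y :=
  RingQuot.mkAlgHom_rel k h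

local notation "δ(" g ")" => isotropyMk k E (ι k g)

lemma isotropyMk_pt_mul_pt (p q p' q' : V) :
    δ(pt p q) * δ(pt p' q') = if p = p' ∧ q = q' then δ(pt p q) else 0 := by
  simpa only [map_mul, apply_ite (isotropyMk k E), map_zero] using
    isotropyMk_eq_of_rel (.dx (.hx (.pt_mul (k := k) (E := E) p q p' q')))

lemma isotropyMk_pt_of_ne {p q : V} (hpq : p ≠ q) : δ(pt p q) = 0 := by
  have src_eq_tgt : ∑ i, δ(pt p i) = ∑ i, δ(pt i p) := by
    simpa only [map_sum] using isotropyMk_eq_of_rel (.iso (k := k) (E := E) p)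
  calc δ(pt p q) = (∑ i, δ(pt p i)) * δ(pt p q) := by
        simp [Finset.sum_mul, isotropyMk_pt_mul_pt]
    _ = (∑ i, δ(pt i p)) * δ(pt p q) := by rw [src_eq_tgt]
    _ = 0 := by simp [Finset.sum_mul, isotropyMk_pt_mul_pt, hpq]

lemma isotropyMk_eq_zero_of_norm {x : FreeAlgebra k (DGen V E)} {a b c d : V}
    (hx : DXIsoRel k V E x (ι k (pt a b) * x * ι k (pt c d))) (h : a ≠ b ∨ c ≠ d) :
    isotropyMk k E x = 0 := by
  rw [isotropyMk_eq_of_rel hx, map_mul, map_mul]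
  rcases h with hab | hcd
  · rw [isotropyMk_pt_of_ne hab, zero_mul, zero_mul]
  · rw [isotropyMk_pt_of_ne hcd, mul_zero]

lemma isotropyMk_par_of_ne {a b c d : V} (hab : E a b) (hcd : E c d) (h : ¬(a = c ∧ b = d)) :
    δ(par a b c d hab hcd) = 0 :=
  isotropyMk_eq_zero_of_norm (.dx (.hx (.par_norm a b c d hab hcd))) (by tauto)

lemma isotropyMk_rev_of_ne {a b c d : V} (hab : E a b) (hcd : E c d) (h : ¬(a = c ∧ b = d)) :
    δ(rev a b c d hab hcd) = 0 :=
  isotropyMk_eq_zero_of_norm (.dx (.hx (.rev_norm a b c d hab hcd))) (by tauto)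

lemma isotropyMk_lt (hloop : ∀ v, ¬E v v) {a b : V} (hab : E a b) (q : V) :
    δ(lt a b hab q) = 0 :=
  isotropyMk_eq_zero_of_norm (.dx (.hx (.lt_norm a b hab q))) (ne_or_ne_of_edge hloop hab q).symm

lemma isotropyMk_rt (hloop : ∀ v, ¬E v v) {a b : V} (hab : E a b) (q : V) :
    δ(rt a b hab q) = 0 :=
  isotropyMk_eq_zero_of_norm (.dx (.hx (.rt_norm a b hab q)))
    ((ne_or_ne_of_edge hloop hab q).imp Ne.symm Ne.symm)

lemma isotropyMk_diagIncl_diagProj (hloop : ∀ v, ¬E v v) (x : FreeAlgebra k (DGen V E)) :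
    isotropyMk k E (diagIncl k (diagProj k x)) = isotropyMk k E x := by
  suffices ((isotropyMk k E).comp (diagIncl k)).comp (diagProj k) = isotropyMk k E from
    DFunLike.congr_fun this x
  ext (⟨p, q⟩ | ⟨a, b, c, d, hab, hcd⟩ | ⟨a, b, c, d, hab, hcd⟩ | ⟨a, b, hab, q⟩ | ⟨a, b, hab, q⟩)
  · by_cases h : p = q
    · simp [h]
    · simp [h, isotropyMk_pt_of_ne]
  · by_cases h : a = c ∧ b = d
    · obtain ⟨rfl, rfl⟩ := h
      simp
    · simp [h, isotropyMk_par_of_ne]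
  · by_cases h : a = c ∧ b = d
    · obtain ⟨rfl, rfl⟩ := h
      simp
    · simp [h, isotropyMk_rev_of_ne]
  · simp [isotropyMk_lt hloop]
  · simp [isotropyMk_rt hloop]

lemma isotropyMk_diagIncl_eq_of_piRel (hloop : ∀ v, ¬E v v) {x y : FreeAlgebra k (PiGen V E)}
    (h : PiRel k V E x y) : isotropyMk k E (diagIncl k x) = isotropyMk k E (diagIncl k y) := by
  obtain ⟨x, y, h', rfl, rfl⟩ := h.exists_dxIsoRel
  simpa only [isotropyMk_diagIncl_diagProj hloop] using isotropyMk_eq_of_rel h'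

variable (k) in
/-- The isomorphism from the isotropy quotient of `DX` to `kΠ_D` induced by `diagProj`. -/
noncomputable def isotropyEquiv (hloop : ∀ v, ¬E v v) :
    RingQuot (DXIsoRel k V E) ≃ₐ[k] PiAlgebra k V E :=
  ringQuotAlgEquiv (diagProj k) (diagIncl k) (fun _ _ => piMk_diagProj_eq_of_dxIsoRel)
    (fun _ _ => isotropyMk_diagIncl_eq_of_piRel hloop) (isotropyMk_diagIncl_diagProj hloop)
    (fun y => congrArg _ (diagProj_diagIncl y))

lemma isotropyEquiv_isotropyMk (hloop : ∀ v, ¬E v v) (x : FreeAlgebra k (DGen V E)) :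
    isotropyEquiv k hloop (isotropyMk k E x) = piMk k V E (diagProj k x) :=
  ringQuotAlgEquiv_mkAlgHom ..

lemma adjoin_range_isotropyMk_diagIncl (hloop : ∀ v, ¬E v v) :
    Algebra.adjoin k (Set.range fun g => isotropyMk k E (diagIncl k (ι k g))) = ⊤ := by
  have surj : Function.Surjective ((isotropyMk k E).comp (diagIncl k)) := by
    intro h
    obtain ⟨x, rfl⟩ := RingQuot.mkAlgHom_surjective k _ h
    exact ⟨diagProj k x, isotropyMk_diagIncl_diagProj hloop x⟩
  change Algebra.adjoin k (Set.range (((isotropyMk k E).comp (diagIncl k)) ∘ ι k)) = ⊤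
  rw [Set.range_comp, ← AlgHom.map_adjoin, adjoin_range_ι, Algebra.map_top,
    (AlgHom.range_eq_top _).2 surj]

lemma isotropyEquiv_diagIncl (hloop : ∀ v, ¬E v v) (y : FreeAlgebra k (PiGen V E)) :
    isotropyEquiv k hloop (isotropyMk k E (diagIncl k y)) = piMk k V E y := by
  rw [isotropyEquiv_isotropyMk, diagProj_diagIncl]

variable {B₁ : LeftBialgebroid k (V → k) (RingQuot (DXIsoRel k V E))}
  {B₂ : LeftBialgebroid k (V → k) (PiAlgebra k V E)}

lemma IsDoubleDigraphBialgebroid.comul_isotropyMk_diagIncl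
    (hB₁ : IsDoubleDigraphBialgebroid k V E _ (fun g => isotropyMk k E (ι k g)) B₁)
    (g : PiGen V E) :
    B₁.comul (isotropyMk k E (diagIncl k (ι k g))) -
        isotropyMk k E (diagIncl k (ι k g)) ⊗ₜ[k] isotropyMk k E (diagIncl k (ι k g)) ∈
      balancer k (V → k) _ B₁.src B₁.tgt := by
  obtain ⟨-, -, -, -, -, comul_pt, comul_edge, -⟩ := hB₁
  match g with
  | .id p =>
    have mem := comul_pt p p
    rw [Fintype.sum_eq_single p fun i hi => by simp [isotropyMk_pt_of_ne hi]] at mem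
    simpa using mem
  | .fwd a b hab =>
    have mem := (comul_edge a b a b hab hab).1
    rw [sum_sum_dite_eq_single hab fun s t hst h => by
      simp [isotropyMk_par_of_ne hab hst h]] at mem
    simpa using mem
  | .bwd a b hab =>
    have mem := (comul_edge a b a b hab hab).2
    rw [sum_sum_dite_eq_single hab fun s t hst h => by
      simp [isotropyMk_rev_of_ne hab hst h]] at mem
    simpa using mem

namespace IsPiAlgebroid

lemma tgt_eq_src (hB₂ : IsPiAlgebroid k V E B₂) (a : V → k) : B₂.tgt a = B₂.src a := by
  suffices B₂.tgt = B₂.src.toLinearMap from DFunLike.congr_fun this a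
  refine (Pi.basisFun k V).ext fun p => ?_
  simp [hB₂.1 p]

lemma mul_src (hB₂ : IsPiAlgebroid k V E B₂) (g : PiGen V E) (a : V → k) :
    π(g) * B₂.src a = a g.source • π(g) := by
  suffices LinearMap.mulLeft k π(g) ∘ₗ B₂.src.toLinearMap =
      (LinearMap.proj g.source).smulRight π(g) from DFunLike.congr_fun this a
  refine (Pi.basisFun k V).ext fun p => ?_
  simp [hB₂.1 p, piMk_mul_id, Pi.single_apply]

lemma comul_mul_mem_balancer (hB₂ : IsPiAlgebroid k V E B₂) (g : PiGen V E) (a : V → k) :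
    B₂.comul π(g) * (B₂.tgt a ⊗ₜ[k] 1 - 1 ⊗ₜ[k] B₂.src a) ∈
      balancer k (V → k) (PiAlgebra k V E) B₂.src B₂.tgt :=
  comul_mul_mem_balancer_of_groupLike (hB₂.2.2.2 g) (hB₂.mul_src g a)
    (by rw [hB₂.tgt_eq_src, hB₂.mul_src])

end IsPiAlgebroid

variable (hloop : ∀ v, ¬E v v)
  (hB₁ : IsDoubleDigraphBialgebroid k V E _ (fun g => isotropyMk k E (ι k g)) B₁)
  (hB₂ : IsPiAlgebroid k V E B₂)
include hB₁ hB₂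

lemma counit_isotropyMk_diagIncl (g : PiGen V E) :
    B₁.counit (isotropyMk k E (diagIncl k (ι k g))) = B₂.counit π(g) := by
  obtain ⟨-, -, counit_pt, counit_edge, -⟩ := hB₁
  obtain ⟨-, counit_id, counit_fwd_bwd, -⟩ := hB₂
  match g with
  | .id p => simp [counit_pt, counit_id]
  | .fwd a b h => simp [(counit_edge a b a b h h).1, (counit_fwd_bwd a b h).1]
  | .bwd a b h => simp [(counit_edge a b a b h h).2, (counit_fwd_bwd a b h).2]

lemma isotropyEquiv_src (a : V → k) : isotropyEquiv k hloop (B₁.src a) = B₂.src a := by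
  suffices (isotropyEquiv k hloop).toLinearMap ∘ₗ B₁.src.toLinearMap = B₂.src.toLinearMap from
    DFunLike.congr_fun this a
  refine (Pi.basisFun k V).ext fun p => ?_
  simp [hB₁.1 p, hB₂.1 p, isotropyEquiv_isotropyMk, apply_ite (piMk k V E)]

lemma isotropyEquiv_tgt (a : V → k) : isotropyEquiv k hloop (B₁.tgt a) = B₂.tgt a := by
  suffices (isotropyEquiv k hloop).toLinearMap ∘ₗ B₁.tgt = B₂.tgt from
    DFunLike.congr_fun this a
  refine (Pi.basisFun k V).ext fun p => ?_
  simp [hB₁.2.1 p, hB₂.1 p, isotropyEquiv_isotropyMk, apply_ite (piMk k V E)]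

include hloop in
lemma isotropyMk_diagIncl_mul_src (g : PiGen V E) (a : V → k) :
    isotropyMk k E (diagIncl k (ι k g)) * B₁.src a =
      a g.source • isotropyMk k E (diagIncl k (ι k g)) := by
  apply (isotropyEquiv k hloop).injective
  rw [map_mul, map_smul, isotropyEquiv_diagIncl, isotropyEquiv_src hloop hB₁ hB₂, hB₂.mul_src]

lemma isBialgebroidHom_isotropyEquiv : IsBialgebroidHom B₁ B₂ (isotropyEquiv k hloop).toAlgHom := by
  have hsrc : ∀ a, (isotropyEquiv k hloop).toAlgHom (B₁.src a) = B₂.src a :=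
    isotropyEquiv_src hloop hB₁ hB₂
  have htgt : ∀ a, (isotropyEquiv k hloop).toAlgHom (B₁.tgt a) = B₂.tgt a :=
    isotropyEquiv_tgt hloop hB₁ hB₂
  have hgen (g) : (isotropyEquiv k hloop).toAlgHom (isotropyMk k E (diagIncl k (ι k g))) = π(g) :=
    isotropyEquiv_diagIncl hloop (ι k g)
  have generate := adjoin_range_isotropyMk_diagIncl (k := k) hloop
  refine ⟨hsrc, htgt, counit_map_of_adjoin_eq_top generate hsrc ?_,
    map_comul_sub_mem_of_adjoin_eq_top generate hsrc htgt ?_ ?_⟩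
  · rintro _ ⟨g, rfl⟩ a
    rw [isotropyMk_diagIncl_mul_src hloop hB₁ hB₂, map_smul, map_smul, map_smul, hgen,
      counit_isotropyMk_diagIncl hB₁ hB₂]
  · rintro _ ⟨g, rfl⟩ a
    rw [hgen]
    exact hB₂.comul_mul_mem_balancer g a
  · rintro _ ⟨g, rfl⟩
    have mem := Submodule.sub_mem _
      (map_mem_balancer hsrc htgt (hB₁.comul_isotropyMk_diagIncl g)) (hB₂.2.2.2 g)
    rw [hgen]
    rw [map_sub, TensorProduct.map_tmul, AlgHom.toLinearMap_apply, hgen] at mem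
    rwa [sub_sub_sub_cancel_right] at mem

end IsotropyQuotient

open FreeAlgebra DGen in
/-- For a finite digraph `D`, the isotropy quotient of the Hopf
algebroid `DX` (presented as a quotient of the path algebra of the double digraph by
the `HX¹` relations together with the triangle and square relations) is isomorphic, as
a Hopf algebroid, to the groupoid algebra `kΠ_D` of the fundamental groupoid of `D`. -/
theorem statement17
    (k V : Type) [Field k] [Fintype V] [DecidableEq V]
    (E : V → V → Prop) [DecidableRel E] (hloop : ∀ v : V, ¬ E v v)
    (B₁ : LeftBialgebroid k (V → k) (RingQuot (DXIsoRel k V E)))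
    (hB₁ : IsDoubleDigraphBialgebroid k V E (RingQuot (DXIsoRel k V E))
      (fun g => RingQuot.mkAlgHom k (DXIsoRel k V E) (ι k g)) B₁)
    (B₂ : LeftBialgebroid k (V → k) (PiAlgebra k V E))
    (hB₂ : IsPiAlgebroid k V E B₂) :
    ∃ Φ : RingQuot (DXIsoRel k V E) ≃ₐ[k] PiAlgebra k V E,
      (∀ p q : V, Φ (RingQuot.mkAlgHom k (DXIsoRel k V E) (ι k (pt (E := E) p q))) =
        if p = q then piMk k V E (ι k (PiGen.id (E := E) p)) else 0) ∧
      (∀ (a b c d : V) (hab : E a b) (hcd : E c d),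
        Φ (RingQuot.mkAlgHom k (DXIsoRel k V E) (ι k (par a b c d hab hcd))) =
          (if a = c ∧ b = d then piMk k V E (ι k (PiGen.fwd a b hab)) else 0) ∧
        Φ (RingQuot.mkAlgHom k (DXIsoRel k V E) (ι k (rev a b c d hab hcd))) =
          (if a = c ∧ b = d then piMk k V E (ι k (PiGen.bwd a b hab)) else 0)) ∧
      (∀ (a b : V) (hab : E a b) (q : V),
        Φ (RingQuot.mkAlgHom k (DXIsoRel k V E) (ι k (lt a b hab q))) = 0 ∧
        Φ (RingQuot.mkAlgHom k (DXIsoRel k V E) (ι k (rt a b hab q))) = 0) ∧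
      IsBialgebroidHom B₁ B₂ Φ.toAlgHom := by
  refine ⟨isotropyEquiv k hloop, fun p q => ?_, fun a b c d hab hcd => ⟨?_, ?_⟩,
    fun a b hab q => ⟨?_, ?_⟩, isBialgebroidHom_isotropyEquiv hloop hB₁ hB₂⟩
  · rw [isotropyEquiv_isotropyMk, diagProj_pt, apply_ite (piMk k V E), map_zero]
  · rw [isotropyEquiv_isotropyMk, diagProj_par, apply_ite (piMk k V E), map_zero]
  · rw [isotropyEquiv_isotropyMk, diagProj_rev, apply_ite (piMk k V E), map_zero]
  · rw [isotropyEquiv_isotropyMk, diagProj_lt, map_zero]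
  · rw [isotropyEquiv_isotropyMk, diagProj_rt, map_zero]
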